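/- For every continuous f : Σ_N^+ → ℝ, the function G_μ f belongs to D_0 with Δ(G_μ f) = −f; that is, lim_{m→∞} max_{p ∈ V_m ∖ V_0} |N^{m+1} H_m(G_μ f)(p) + f(p)| = 0. -/

import Mathlib

open Filter Topology MeasureTheory Finset Classical

noncomputable section

/-- The one-sided full shift space `Σ_N^+` on `N` symbols; coordinates are indexed
from `0`, so the paper's `x_1 x_2 ⋯` is `x 0, x 1, ⋯` here. It carries the product
of the discrete topology on `Fin N`. -/
abbrev SSp (N : ℕ) : Type := ℕ → Fin N

/-- The level-`m` vertex set `V_m = {p : p_i = p_{i+1} for all i ≥ m+1}` (1-based),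
i.e. the sequences that are constant from (0-based) coordinate `m` on.  It is
realized as a `Finset` via the parametrization by the first `m+1` coordinates;
see `mem_V` for the defining property. -/
noncomputable def V (N m : ℕ) : Finset (SSp N) :=
  (Finset.univ : Finset (Fin (m + 1) → Fin N)).image
    (fun w j => w ⟨min j m, by omega⟩)

lemma const_from (N m : ℕ) (p : SSp N) (h : ∀ i, m ≤ i → p i = p (i + 1)) :
    ∀ j, m ≤ j → p j = p m := by
  intro j hj
  induction j with
  | zero => have : m = 0 := by omega
            simp [this]
  | succ k ih =>
      rcases Nat.lt_or_ge k m with hk | hk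
      · have : m = k + 1 := by omega
        simp [this]
      · rw [← h k hk]
        exact ih hk

/-- Membership in `V N m` is exactly the paper's condition
`p_i = p_{i+1}` for all `i ≥ m+1` (1-based), i.e. `p i = p (i+1)` for all `i ≥ m`. -/
lemma mem_V {N m : ℕ} {p : SSp N} :
    p ∈ V N m ↔ ∀ i, m ≤ i → p i = p (i + 1) := by
  classical
  constructor
  · intro hp i hi
    simp only [V, Finset.mem_image] at hp
    obtain ⟨w, -, rfl⟩ := hp
    have h1 : min i m = m := by omega
    have h2 : min (i + 1) m = m := by omega
    simp [h1, h2]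
  · intro h
    simp only [V, Finset.mem_image]
    refine ⟨fun j => p j, Finset.mem_univ _, ?_⟩
    funext j
    rcases Nat.lt_or_ge j m with hj | hj
    · have : min j m = j := by omega
      simp [this]
    · have : min j m = m := by omega
      simp only [this]
      exact (const_from N m p h j hj).symm

/-- The deleted neighbourhood `U_{p,m} = {q ∈ V_m : q ≠ p, q_i = p_i for 1 ≤ i ≤ m}`
(1-based), i.e. `q` agrees with `p` on the first `m` (0-based: `i < m`) coordinates. -/
noncomputable def U (N m : ℕ) (p : SSp N) : Finset (SSp N) :=
  (V N m).filter (fun q => q ≠ p ∧ ∀ i, i < m → q i = p i)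

/-- `κ_p = min {j : p ∈ V_j}`. -/
noncomputable def kappa (N : ℕ) (p : SSp N) : ℕ := sInf {j | p ∈ V N j}

/-- The difference operator
`H_m u (p) = Σ_{i = κ_p}^{m} Σ_{q ∈ U_{p,i}} (u(q) − u(p))`. -/
noncomputable def H (N m : ℕ) (u : SSp N → ℝ) (p : SSp N) : ℝ :=
  ∑ i ∈ Finset.Icc (kappa N p) m, ∑ q ∈ U N i p, (u q - u p)

/-- The Dirichlet form `E_{H_m}(u, v) = − Σ_{p ∈ V_m} u(p) · H_m v(p)`. -/
noncomputable def EH (N m : ℕ) (u v : SSp N → ℝ) : ℝ :=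
  -∑ p ∈ V N m, u p * H N m v p

/-- The cylinder set `[p_1 ⋯ p_m]`, determined by the first `m` coordinates of `p`. -/
def cyl (N m : ℕ) (p : SSp N) : Set (SSp N) := {x | ∀ i, i < m → x i = p i}

/-- `χ_p^m` : the indicator function of the cylinder set `[p_1 ⋯ p_{m+1}]`. -/
noncomputable def chi (N m : ℕ) (p : SSp N) : SSp N → ℝ :=
  (cyl N (m + 1) p).indicator 1

/-- `u ∈ dom E`: `u` is continuous and the energy
`E(u) = lim_m E_{H_m}(u|_{V_m})` exists (and is finite). -/
def MemDomE (N : ℕ) (u : SSp N → ℝ) : Prop :=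
  Continuous u ∧ ∃ L : ℝ, Tendsto (fun m => EH N m u u) atTop (nhds L)

/-- `v ∈ dom_M E`: `v` has finite energy and vanishes on the boundary `V_M`. -/
def MemDomME (N M : ℕ) (v : SSp N → ℝ) : Prop :=
  MemDomE N v ∧ ∀ p ∈ V N M, v p = 0

/-- `u ∈ 𝒟_M` with `Δ u = f` (strong formulation with boundary `V_M`):
`u` and `f` are continuous and
`lim_{m → ∞} max_{p ∈ V_m ∖ V_M} |N^{m+1} H_m u(p) − f(p)| = 0`. -/
def IsLaplacianOn (N M : ℕ) (u f : SSp N → ℝ) : Prop :=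
  Continuous u ∧ Continuous f ∧
    ∀ ε : ℝ, 0 < ε → ∃ m₀ : ℕ, ∀ m, m₀ ≤ m → ∀ p ∈ V N m, p ∉ V N M →
      |(N : ℝ) ^ (m + 1) * H N m u p - f p| < ε

/-- `u ∈ D_μ` with `Δ u = f` (original definition of the Laplacian):
`u` and `f` are continuous and
`lim_{m → ∞} max_{p ∈ V_m ∖ V_{m−1}} |N^{m+1} H_m u(p) − f(p)| = 0`
(the level is written `m+1` to avoid natural subtraction). -/
def IsLaplacianDmu (N : ℕ) (u f : SSp N → ℝ) : Prop :=
  Continuous u ∧ Continuous f ∧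
    ∀ ε : ℝ, 0 < ε → ∃ m₀ : ℕ, ∀ m, m₀ ≤ m → ∀ p ∈ V N (m + 1), p ∉ V N m →
      |(N : ℝ) ^ (m + 2) * H N (m + 1) u p - f p| < ε

/-- `μ` is the equidistributed Bernoulli measure:
`μ([p_1 ⋯ p_m]) = N^{−m}` for every cylinder set. -/
def IsBernoulli (N : ℕ) (μ : Measure (SSp N)) : Prop :=
  ∀ (m : ℕ) (p : SSp N), μ (cyl N m p) = (N : ENNReal)⁻¹ ^ m

/-- `ρ(x,y) = min {i : x_i ≠ y_i}` (1-based; `0`-based first disagreement plus one). -/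
noncomputable def rho (N : ℕ) (x y : SSp N) : ℕ := sInf {i | x i ≠ y i} + 1

/-- The matrix `(G_m)_{pq}`: `2/N` if `q = p`, `1/N` if `q ∈ U_{p,m}`, `0` otherwise. -/
noncomputable def Gmat (N m : ℕ) (p q : SSp N) : ℝ :=
  if q = p then 2 / N else if q ∈ U N m p then 1 / N else 0

/-- The Green's function
`g(x,y) = Σ_{m=1}^{ρ(x,y)−1} Σ_{r,s ∈ V_m ∖ V_{m−1}} (G_m)_{rs} χ_r^m(x) χ_s^m(y)`
for `ρ(x,y) > 1`, and `g(x,y) = 0` for `ρ(x,y) = 1` (the sum is then empty). -/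
noncomputable def greenFn (N : ℕ) (x y : SSp N) : ℝ :=
  ∑ m ∈ Finset.Icc 1 (rho N x y - 1),
    ∑ r ∈ (V N m).filter (fun r => r ∉ V N (m - 1)),
      ∑ s ∈ (V N m).filter (fun s => s ∉ V N (m - 1)),
        Gmat N m r s * chi N m r x * chi N m s y

/-- The Green's operator `G_μ f (x) = ∫_{Σ_N^+ ∖ {x}} g(x,y) f(y) dμ(y)`. -/
noncomputable def Gop (N : ℕ) (μ : Measure (SSp N)) (f : SSp N → ℝ) (x : SSp N) : ℝ :=
  ∫ y in ({x}ᶜ : Set (SSp N)), greenFn N x y * f y ∂μ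

/-!
At a point of `V_n` only the levels below `n` of the Green's function contribute, so there
`G_μ f` is a finite sum, and for two points of `V_n` with the same first `n` symbols these sums
differ only in the top summand. That summand is a combination of integrals of `f` over cylinder
sets, and the sum of `G_μ f(q) - G_μ f(p)` over `q ∈ U_{p,i}` collapses to
`∫_{[p_1⋯p_i]} f - ∫_{[p_1⋯p_{i+1}]} f`, without the first integral when `i = κ_p`. The sum over
`i` telescopes, so that `H_m (G_μ f)(p)` is exactly `-∫_{[p_1⋯p_{m+1}]} f`. Multiplied by
`N^{m+1}` this is minus the mean of `f` over a cylinder set shrinking to `p`, which tends to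
`-f(p)` uniformly in `p`.
-/

section Cylinders

variable {N m n : ℕ} {x y : SSp N}

lemma cyl_eq_of_mem (h : y ∈ cyl N n x) : cyl N n y = cyl N n x :=
  PiNat.mem_cylinder_iff_eq.1 h

lemma cyl_anti (x : SSp N) (h : m ≤ n) : cyl N n x ⊆ cyl N m x :=
  PiNat.cylinder_anti x h

lemma mem_cyl_succ : y ∈ cyl N (n + 1) x ↔ y ∈ cyl N n x ∧ y n = x n :=
  Nat.forall_lt_succ_right

lemma isOpen_cyl (n : ℕ) (x : SSp N) : IsOpen (cyl N n x) :=
  PiNat.isOpen_cylinder _ x n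

lemma measurableSet_cyl (n : ℕ) (x : SSp N) : MeasurableSet (cyl N n x) :=
  (isOpen_cyl n x).measurableSet

lemma le_sInf_ne_of_mem_cyl (hne : y ≠ x) (hy : y ∈ cyl N n x) : n ≤ sInf {i | x i ≠ y i} :=
  le_csInf (Function.ne_iff.1 hne.symm) fun i hi => not_lt.1 fun hin => hi (hy i hin).symm

lemma continuous_of_forall_mem_cyl_eq {X : Type*} [TopologicalSpace X] {φ : SSp N → X}
    (h : ∀ x, ∀ y ∈ cyl N n x, φ y = φ x) : Continuous φ :=
  IsLocallyConstant.continuous <| (IsLocallyConstant.iff_eventually_eq φ).2 fun x =>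
    eventually_of_mem ((isOpen_cyl n x).mem_nhds fun _ _ => rfl) (h x)

lemma exists_forall_mem_cyl_dist_lt {X : Type*} [PseudoMetricSpace X] {f : SSp N → X}
    (hf : Continuous f) {ε : ℝ} (hε : 0 < ε) :
    ∃ n, ∀ x, ∀ y ∈ cyl N n x, dist (f y) (f x) < ε := by
  let _ : MetricSpace (SSp N) := PiNat.metricSpace
  obtain ⟨δ, hδ, hfδ⟩ :=
    Metric.uniformContinuous_iff.1 (CompactSpace.uniformContinuous_of_continuous hf) ε hε
  obtain ⟨n, hn⟩ := exists_pow_lt_of_lt_one hδ (one_half_lt_one (α := ℝ))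
  exact ⟨n, fun x y hy => hfδ ((PiNat.mem_cylinder_iff_dist_le.1 hy).trans_lt hn)⟩

end Cylinders

section Vertices

variable {N i m n : ℕ} {c d : Fin N} {p q r x y : SSp N}

/-- The sequence `p_1 ⋯ p_i c c c ⋯`; for `c ∈ S` these are the points of `V_i` lying in the
cylinder set `[p_1 ⋯ p_i]`. -/
def branch (p : SSp N) (i : ℕ) (c : Fin N) : SSp N := fun j => if j < i then p j else c

/-- The vertex `x_1 ⋯ x_n x_{n+1} x_{n+1} ⋯` of `V_n` representing the cylinder set
`[x_1 ⋯ x_{n+1}]`. -/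
def vertex (n : ℕ) (x : SSp N) : SSp N := branch x n (x n)

lemma branch_apply_of_lt {j : ℕ} (h : j < i) : branch p i c j = p j := if_pos h

lemma branch_apply_of_le {j : ℕ} (h : i ≤ j) : branch p i c j = c := if_neg h.not_gt

lemma branch_mem_cyl (p : SSp N) (i : ℕ) (c : Fin N) : branch p i c ∈ cyl N i p :=
  fun _ hj => branch_apply_of_lt hj

lemma branch_mem_V (p : SSp N) (i : ℕ) (c : Fin N) : branch p i c ∈ V N i :=
  mem_V.2 fun j hj => by rw [branch_apply_of_le hj, branch_apply_of_le (by lia)]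

lemma branch_eq_branch_iff : branch q i c = branch p i d ↔ q ∈ cyl N i p ∧ c = d := by
  refine ⟨fun h => ⟨fun j hj => ?_, ?_⟩, fun ⟨hq, hc⟩ => funext fun j => ?_⟩
  · rw [← branch_apply_of_lt (p := q) (c := c) hj, h, branch_apply_of_lt hj]
  · rw [← branch_apply_of_le (p := q) (c := c) le_rfl, h, branch_apply_of_le le_rfl]
  · exact hc ▸ ite_congr rfl (hq j) fun _ => rfl

lemma mem_cyl_succ_branch : y ∈ cyl N (n + 1) (branch x n c) ↔ y ∈ cyl N n x ∧ y n = c := by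
  rw [mem_cyl_succ, cyl_eq_of_mem (branch_mem_cyl x n c), branch_apply_of_le le_rfl]

lemma V_mono (h : m ≤ n) : V N m ⊆ V N n :=
  fun _ hp => mem_V.2 fun k hk => mem_V.1 hp k (h.trans hk)

lemma mem_V_of_mem_V_succ (hp : p ∈ V N (n + 1)) : p ∈ V N n ↔ p n = p (n + 1) := by
  refine ⟨fun h => mem_V.1 h n le_rfl, fun h => mem_V.2 fun j hj => ?_⟩
  rcases hj.eq_or_lt with rfl | hj
  · exact h
  · exact mem_V.1 hp j hj

lemma vertex_mem_V (n : ℕ) (x : SSp N) : vertex n x ∈ V N n := branch_mem_V x n _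

lemma vertex_eq_self (hp : p ∈ V N n) : vertex n p = p := by
  funext j
  rcases lt_or_ge j n with h | h
  · exact branch_apply_of_lt h
  · exact (branch_apply_of_le h).trans (const_from N n p (mem_V.1 hp) j h).symm

lemma vertex_succ_mem_V : vertex (n + 1) x ∈ V N n ↔ x n = x (n + 1) := by
  rw [mem_V_of_mem_V_succ (vertex_mem_V _ _), vertex, branch_apply_of_lt n.lt_succ_self,
    branch_apply_of_le le_rfl]

lemma vertex_eq_vertex_iff : vertex n y = vertex n x ↔ y ∈ cyl N (n + 1) x :=
  branch_eq_branch_iff.trans mem_cyl_succ.symm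

lemma vertex_mem_U_vertex_iff :
    vertex n y ∈ U N n (vertex n x) ↔ y ∈ cyl N n x ∧ y n ≠ x n := by
  have hcyl : (∀ i < n, vertex n y i = vertex n x i) ↔ y ∈ cyl N n x :=
    forall₂_congr fun i hi => by rw [vertex, vertex, branch_apply_of_lt hi, branch_apply_of_lt hi]
  rw [U, Finset.mem_filter, Ne, vertex_eq_vertex_iff, mem_cyl_succ, hcyl]
  have := vertex_mem_V n y
  tauto

lemma insert_U_eq_image_branch (hp : p ∈ V N i) :
    insert p (U N i p) = univ.image (branch p i) := by
  ext q
  simp only [U, Finset.mem_insert, Finset.mem_filter, Finset.mem_image, Finset.mem_univ, true_and]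
  constructor
  · rintro (rfl | ⟨hqV, -, hq⟩)
    · exact ⟨q i, vertex_eq_self hp⟩
    · exact ⟨q i, (branch_eq_branch_iff.2 ⟨hq, rfl⟩).symm.trans (vertex_eq_self hqV)⟩
  · rintro ⟨c, rfl⟩
    exact or_iff_not_imp_left.2 fun h => ⟨branch_mem_V p i c, h, branch_mem_cyl p i c⟩

lemma sum_U_sub {G : Type*} [AddCommGroup G] (u : SSp N → G) (hp : p ∈ V N i) :
    ∑ q ∈ U N i p, (u q - u p) = ∑ c, (u (branch p i c) - u p) := by
  rw [← Finset.sum_insert_zero (f := fun q => u q - u p) (sub_self (u p)),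
    insert_U_eq_image_branch hp, Finset.sum_image fun c _ d _ h => (branch_eq_branch_iff.1 h).2]

lemma mem_V_kappa (hp : p ∈ V N n) : p ∈ V N (kappa N p) :=
  Nat.sInf_mem (s := {j | p ∈ V N j}) ⟨n, hp⟩

lemma kappa_le (hp : p ∈ V N n) : kappa N p ≤ n := Nat.sInf_le hp

end Vertices

section GreensFunction

variable {N m n : ℕ} {r x y : SSp N}

lemma chi_eq_ite (hr : r ∈ V N n) : chi N n r x = if r = vertex n x then 1 else 0 := by
  have : x ∈ cyl N (n + 1) r ↔ r = vertex n x := by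
    rw [← vertex_eq_vertex_iff, vertex_eq_self hr, eq_comm]
  simp only [chi, Set.indicator_apply, this, Pi.one_apply]

lemma sum_mul_chi {A : Finset (SSp N)} (hA : A ⊆ V N n) (φ : SSp N → ℝ) (x : SSp N) :
    ∑ r ∈ A, φ r * chi N n r x = if vertex n x ∈ A then φ (vertex n x) else 0 := by
  rw [← Finset.sum_ite_eq']
  exact Finset.sum_congr rfl fun r hr => by rw [chi_eq_ite (hA hr), mul_ite, mul_one, mul_zero]

lemma Gmat_vertex (n : ℕ) (x y : SSp N) :
    Gmat N n (vertex n x) (vertex n y) =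
      (N : ℝ)⁻¹ * ((cyl N n x).indicator 1 y + (cyl N (n + 1) x).indicator 1 y) := by
  simp only [Gmat, vertex_eq_vertex_iff, vertex_mem_U_vertex_iff, mem_cyl_succ,
    Set.indicator_apply, Pi.one_apply]
  by_cases hy : y ∈ cyl N n x
  · by_cases hn : y n = x n
    · simp only [hy, hn, and_self, if_true]
      ring
    · simp [hy, hn]
  · simp [hy]

/-- The level `m + 1` summand of the Green's function; the shift of the index avoids the truncated
subtraction in `greenFn`. -/
def greenLevel (m : ℕ) (x y : SSp N) : ℝ :=
  ∑ r ∈ (V N (m + 1)).filter (fun r => r ∉ V N m),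
    ∑ s ∈ (V N (m + 1)).filter (fun s => s ∉ V N m),
      Gmat N (m + 1) r s * chi N (m + 1) r x * chi N (m + 1) s y

lemma greenLevel_eq_ite (m : ℕ) (x y : SSp N) :
    greenLevel m x y = if x m ≠ x (m + 1) ∧ y m ≠ y (m + 1) then
      Gmat N (m + 1) (vertex (m + 1) x) (vertex (m + 1) y) else 0 := by
  have mem_iff : ∀ z : SSp N,
      vertex (m + 1) z ∈ (V N (m + 1)).filter (fun r => r ∉ V N m) ↔ z m ≠ z (m + 1) := fun z => by
    rw [Finset.mem_filter, vertex_succ_mem_V, and_iff_right (vertex_mem_V _ z)]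
  simp only [greenLevel, sum_mul_chi (Finset.filter_subset _ _), mem_iff]
  by_cases hy : y m ≠ y (m + 1)
  · simp only [if_pos hy, sum_mul_chi (Finset.filter_subset _ _), mem_iff, and_iff_left hy]
  · simp only [hy, if_false, and_false, Finset.sum_const_zero]

/-- For `y ∈ [x_1 ⋯ x_{m+1}]` the condition `y_{m+1} ≠ y_{m+2}` says that `y` avoids the
cylinder set `[x_1 ⋯ x_{m+1} x_{m+1}]`; this is the source of the negative term. -/
lemma greenLevel_eq_indicator (h : x m ≠ x (m + 1)) (y : SSp N) :
    greenLevel m x y = (N : ℝ)⁻¹ * ((cyl N (m + 1) x).indicator 1 y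
      - (cyl N (m + 2) (branch x (m + 1) (x m))).indicator 1 y
      + (cyl N (m + 2) x).indicator 1 y) := by
  have mem_succ : y ∈ cyl N (m + 2) x ↔ y ∈ cyl N (m + 1) x ∧ y (m + 1) = x (m + 1) := mem_cyl_succ
  simp only [greenLevel_eq_ite, Gmat_vertex, Set.indicator_apply, mem_cyl_succ_branch, mem_succ,
    Pi.one_apply]
  by_cases hy : y ∈ cyl N (m + 1) x
  · have hym : y m = x m := hy m m.lt_succ_self
    by_cases hys : y (m + 1) = x m
    · simp [hy, hym, hys, h]
    · simp [hy, hym, hys, h, Ne.symm hys]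
  · simp [hy]

lemma greenLevel_eq_zero_of_mem_V (hx : x ∈ V N n) (h : n ≤ m) (y : SSp N) :
    greenLevel m x y = 0 := by
  rw [greenLevel_eq_ite, if_neg fun hxy => hxy.1 (mem_V.1 hx m h)]

lemma greenLevel_eq_zero_of_notMem_cyl (h : y ∉ cyl N (m + 1) x) : greenLevel m x y = 0 := by
  simp [greenLevel_eq_ite, Gmat_vertex, mem_cyl_succ (n := m + 1), h]

lemma abs_greenLevel_le (m : ℕ) (x y : SSp N) :
    |greenLevel m x y| ≤ (cyl N (m + 1) x).indicator (fun _ => 2 * (N : ℝ)⁻¹) y := by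
  by_cases hy : y ∈ cyl N (m + 1) x
  · have Gmat_mem : ∀ r s, Gmat N (m + 1) r s ∈ Set.Icc 0 (2 * (N : ℝ)⁻¹) := fun r s => by
      have hN : (0 : ℝ) ≤ (N : ℝ)⁻¹ := by positivity
      simp only [Gmat, div_eq_mul_inv, Set.mem_Icc]
      split_ifs <;> constructor <;> linarith
    rw [Set.indicator_of_mem hy, greenLevel_eq_ite]
    split_ifs
    · rw [abs_of_nonneg (Gmat_mem _ _).1]
      exact (Gmat_mem _ _).2
    · rw [abs_zero]
      positivity
  · rw [greenLevel_eq_zero_of_notMem_cyl hy, Set.indicator_of_notMem hy, abs_zero]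

lemma greenFn_eq_tsum (h : y ≠ x) : greenFn N x y = ∑' m, greenLevel m x y := by
  rw [tsum_eq_sum (s := Finset.range (sInf {i | x i ≠ y i}))]
  · rw [greenFn, rho, Nat.add_sub_cancel, ← Finset.Ico_add_one_right_eq_Icc,
      Finset.sum_Ico_eq_sum_range, Nat.add_sub_cancel]
    exact Finset.sum_congr rfl fun m _ => by rw [add_comm 1 m, Nat.add_sub_cancel, greenLevel]
  · intro m hm
    exact greenLevel_eq_zero_of_notMem_cyl fun hy =>
      hm (Finset.mem_range.2 (le_sInf_ne_of_mem_cyl h hy))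

end GreensFunction

section GreensOperator

variable {N m n : ℕ} {x y : SSp N} {μ : Measure (SSp N)} {f : SSp N → ℝ}

/-- The integral of `f` over the cylinder set `[x_1 ⋯ x_n]`. -/
def cylIntegral (μ : Measure (SSp N)) (f : SSp N → ℝ) (n : ℕ) (x : SSp N) : ℝ :=
  ∫ y in cyl N n x, f y ∂μ

/-- The contribution of level `m + 1` of the Green's function to `G_μ f (x)`. -/
def greenTerm (μ : Measure (SSp N)) (f : SSp N → ℝ) (m : ℕ) (x : SSp N) : ℝ :=
  ∫ y, greenLevel m x y * f y ∂μ

lemma cylIntegral_congr (h : y ∈ cyl N n x) : cylIntegral μ f n y = cylIntegral μ f n x := by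
  rw [cylIntegral, cylIntegral, cyl_eq_of_mem h]

lemma sum_cylIntegral_branch (hf : Integrable f μ) (n : ℕ) (x : SSp N) :
    ∑ c, cylIntegral μ f (n + 1) (branch x n c) = cylIntegral μ f n x := by
  have cyl_eq_iUnion : cyl N n x = ⋃ c, cyl N (n + 1) (branch x n c) := by
    ext y
    simp only [Set.mem_iUnion, mem_cyl_succ_branch, exists_and_left, exists_eq', and_true]
  unfold cylIntegral
  rw [cyl_eq_iUnion, integral_iUnion_fintype (fun c => measurableSet_cyl _ _) _
    fun c => hf.integrableOn]
  intro c d hcd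
  refine Set.disjoint_left.2 fun y hc hd => hcd ?_
  rw [← (mem_cyl_succ_branch.1 hc).2, (mem_cyl_succ_branch.1 hd).2]

lemma greenLevel_mul_eq_indicator (f : SSp N → ℝ) (h : x m ≠ x (m + 1)) :
    (fun y => greenLevel m x y * f y) = fun y => (N : ℝ)⁻¹ * ((cyl N (m + 1) x).indicator f y
      - (cyl N (m + 2) (branch x (m + 1) (x m))).indicator f y
      + (cyl N (m + 2) x).indicator f y) := by
  have one_mul_indicator : ∀ (s : Set (SSp N)) (y : SSp N),
      s.indicator (1 : SSp N → ℝ) y * f y = s.indicator f y := fun s y => by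
    rw [← Set.indicator_mul_left, Pi.one_def]
    simp only [one_mul]
  funext y
  rw [greenLevel_eq_indicator h, mul_assoc, add_mul, sub_mul]
  simp only [one_mul_indicator]

lemma integrable_greenLevel_mul (hf : Integrable f μ) (m : ℕ) (x : SSp N) :
    Integrable (fun y => greenLevel m x y * f y) μ := by
  by_cases h : x m = x (m + 1)
  · simp [greenLevel_eq_ite, h]
  · rw [greenLevel_mul_eq_indicator f h]
    have hi := fun n z => hf.indicator (measurableSet_cyl n z)
    exact (((hi _ _).sub (hi _ _)).add (hi _ _)).const_mul _

lemma greenTerm_eq_ite (hf : Integrable f μ) (m : ℕ) (x : SSp N) :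
    greenTerm μ f m x = if x m = x (m + 1) then 0 else
      (N : ℝ)⁻¹ * (cylIntegral μ f (m + 1) x - cylIntegral μ f (m + 2) (branch x (m + 1) (x m))
        + cylIntegral μ f (m + 2) x) := by
  have hi := fun n z => hf.indicator (measurableSet_cyl n z)
  split_ifs with h
  · simp [greenTerm, greenLevel_eq_ite, h]
  · rw [greenTerm, greenLevel_mul_eq_indicator f h, integral_const_mul,
      integral_add (by exact (hi _ _).sub (hi _ _)) (hi _ _), integral_sub (hi _ _) (hi _ _)]
    simp only [integral_indicator (measurableSet_cyl _ _), cylIntegral]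

lemma greenTerm_congr (h : y ∈ cyl N (m + 2) x) : greenTerm μ f m y = greenTerm μ f m x := by
  have hlevel : greenLevel m y = greenLevel m x := by
    funext z
    rw [greenLevel_eq_ite, greenLevel_eq_ite, vertex_eq_vertex_iff.2 h, h m (by lia),
      h (m + 1) (by lia)]
  rw [greenTerm, greenTerm, hlevel]

/-- The series need not converge to `greenFn N x y` when `y = x`, but points are null sets. -/
lemma Gop_eq_integral_tsum [NullSingletonClass μ] (x : SSp N) :
    Gop N μ f x = ∫ y, ∑' m, greenLevel m x y * f y ∂μ := by
  rw [Gop, restrict_compl_singleton]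
  refine integral_congr_ae ((Measure.ae_ne μ x).mono fun y hy => ?_)
  simp only [tsum_mul_right, greenFn_eq_tsum hy]

lemma Gop_eq_sum_of_mem_V [NullSingletonClass μ] (hf : Integrable f μ) (hx : x ∈ V N n) :
    Gop N μ f x = ∑ m ∈ Finset.range n, greenTerm μ f m x := by
  have tsum_eq : ∀ y, ∑' m, greenLevel m x y * f y =
      ∑ m ∈ Finset.range n, greenLevel m x y * f y := fun y => tsum_eq_sum fun m hm => by
    rw [greenLevel_eq_zero_of_mem_V hx (by simpa using hm), zero_mul]
  simp only [Gop_eq_integral_tsum, tsum_eq, greenTerm]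
  exact integral_finsetSum _ fun m _ => integrable_greenLevel_mul hf m x

end GreensOperator

section DifferenceOperator

variable {N k m : ℕ} {p : SSp N} {μ : Measure (SSp N)} {f : SSp N → ℝ}

lemma Gop_branch_sub [NullSingletonClass μ] (hf : Integrable f μ) (hp : p ∈ V N (k + 1))
    (c : Fin N) :
    Gop N μ f (branch p (k + 1) c) - Gop N μ f p =
      greenTerm μ f k (branch p (k + 1) c) - greenTerm μ f k p := by
  have lower_eq : ∀ m ∈ Finset.range k,
      greenTerm μ f m (branch p (k + 1) c) = greenTerm μ f m p := fun m hm =>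
    greenTerm_congr (cyl_anti p (by simpa using hm) (branch_mem_cyl p (k + 1) c))
  rw [Gop_eq_sum_of_mem_V hf (branch_mem_V p (k + 1) c), Gop_eq_sum_of_mem_V hf hp,
    Finset.sum_range_succ, Finset.sum_range_succ, Finset.sum_congr rfl lower_eq,
    add_sub_add_left_eq_sub]

lemma greenTerm_branch (hf : Integrable f μ) (k : ℕ) (p : SSp N) (c : Fin N) :
    greenTerm μ f k (branch p (k + 1) c) = if p k = c then 0 else
      (N : ℝ)⁻¹ * (cylIntegral μ f (k + 1) p - cylIntegral μ f (k + 2) (branch p (k + 1) (p k))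
        + cylIntegral μ f (k + 2) (branch p (k + 1) c)) := by
  have hmem := branch_mem_cyl p (k + 1) c
  rw [greenTerm_eq_ite hf, branch_apply_of_lt k.lt_succ_self, branch_apply_of_le le_rfl,
    cylIntegral_congr hmem, branch_eq_branch_iff.2 ⟨hmem, rfl⟩]

lemma sum_greenTerm_branch (hf : Integrable f μ) (k : ℕ) (p : SSp N) :
    ∑ c, greenTerm μ f k (branch p (k + 1) c) =
      cylIntegral μ f (k + 1) p - cylIntegral μ f (k + 2) (branch p (k + 1) (p k)) := by
  have hN : (N : ℝ) ≠ 0 := Nat.cast_ne_zero.2 (p 0).pos.ne'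
  set a := cylIntegral μ f (k + 1) p
  set b : Fin N → ℝ := fun c => cylIntegral μ f (k + 2) (branch p (k + 1) c)
  have sum_b : ∑ c, b c = a := sum_cylIntegral_branch hf (k + 1) p
  calc ∑ c, greenTerm μ f k (branch p (k + 1) c)
      = ∑ c, ((N : ℝ)⁻¹ * (a - b (p k) + b c) - if p k = c then (N : ℝ)⁻¹ * a else 0) := by
        refine Finset.sum_congr rfl fun c _ => ?_
        rw [greenTerm_branch hf]
        split_ifs with hc
        · rw [← hc]; ring
        · ring
    _ = (N : ℝ)⁻¹ * (N * (a - b (p k)) + a) - (N : ℝ)⁻¹ * a := by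
        simp only [Finset.sum_sub_distrib, ← Finset.mul_sum, Finset.sum_add_distrib, sum_b,
          Finset.sum_ite_eq, Finset.mem_univ, if_true, Finset.sum_const, Finset.card_univ,
          Fintype.card_fin, nsmul_eq_mul, mul_sub]
    _ = a - b (p k) := by field_simp; ring

lemma sum_U_Gop_sub [NullSingletonClass μ] (hf : Integrable f μ) (hp : p ∈ V N (k + 1)) :
    ∑ q ∈ U N (k + 1) p, (Gop N μ f q - Gop N μ f p) =
      cylIntegral μ f (k + 1) p - cylIntegral μ f (k + 2) (branch p (k + 1) (p k))
        - N * greenTerm μ f k p := by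
  rw [sum_U_sub _ hp, Finset.sum_congr rfl fun c _ => Gop_branch_sub hf hp c,
    Finset.sum_sub_distrib, sum_greenTerm_branch hf, Finset.sum_const, Finset.card_univ,
    Fintype.card_fin, nsmul_eq_mul]

lemma sum_U_Gop_sub_of_mem_V [NullSingletonClass μ] (hf : Integrable f μ) (hp : p ∈ V N k) :
    ∑ q ∈ U N (k + 1) p, (Gop N μ f q - Gop N μ f p) =
      cylIntegral μ f (k + 1) p - cylIntegral μ f (k + 2) p := by
  have hp' := V_mono k.le_succ hp
  have hk : p k = p (k + 1) := mem_V.1 hp k le_rfl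
  have hbranch : branch p (k + 1) (p (k + 1)) = p := vertex_eq_self hp'
  rw [sum_U_Gop_sub hf hp', greenTerm_eq_ite hf, if_pos hk, hk, hbranch, mul_zero, sub_zero]

lemma sum_U_Gop_sub_of_notMem_V [NullSingletonClass μ] (hf : Integrable f μ) (hp : p ∈ V N (k + 1))
    (hpk : p ∉ V N k) :
    ∑ q ∈ U N (k + 1) p, (Gop N μ f q - Gop N μ f p) = -cylIntegral μ f (k + 2) p := by
  have hN : (N : ℝ) ≠ 0 := Nat.cast_ne_zero.2 (p 0).pos.ne'
  rw [sum_U_Gop_sub hf hp, greenTerm_eq_ite hf, if_neg ((mem_V_of_mem_V_succ hp).not.1 hpk),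
    mul_inv_cancel_left₀ hN]
  ring

theorem H_Gop [NullSingletonClass μ] (hf : Integrable f μ) (hp : p ∈ V N m) (hp0 : p ∉ V N 0) :
    H N m (Gop N μ f) p = -cylIntegral μ f (m + 1) p := by
  have hκ := mem_V_kappa hp
  obtain ⟨k, hk⟩ : ∃ k, kappa N p = k + 1 :=
    Nat.exists_eq_succ_of_ne_zero fun h => hp0 (h ▸ hκ)
  have hpk : p ∉ V N k := fun h => by have := kappa_le h; lia
  have hkm : k + 1 ≤ m := hk ▸ kappa_le hp
  rw [hk] at hκ
  rw [H, hk]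
  clear hp
  induction m, hkm using Nat.le_induction with
  | base => rw [Finset.Icc_self, Finset.sum_singleton, sum_U_Gop_sub_of_notMem_V hf hκ hpk]
  | succ m hm ih =>
    rw [Finset.sum_Icc_succ_top (by lia), ih, sum_U_Gop_sub_of_mem_V hf (V_mono hm hκ)]
    ring

end DifferenceOperator

section Bernoulli

variable {N : ℕ} {μ : Measure (SSp N)} {f : SSp N → ℝ}

lemma IsBernoulli.real_cyl (hμ : IsBernoulli N μ) (n : ℕ) (x : SSp N) :
    μ.real (cyl N n x) = ((N : ℝ)⁻¹) ^ n := by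
  rw [Measure.real, hμ n x, ENNReal.toReal_pow, ENNReal.toReal_inv, ENNReal.toReal_natCast]

lemma IsBernoulli.cyl_ne_top (hμ : IsBernoulli N μ) (n : ℕ) (x : SSp N) :
    μ (cyl N n x) ≠ ⊤ := by
  rw [hμ]
  exact ENNReal.pow_ne_top (ENNReal.inv_ne_top.2 (Nat.cast_ne_zero.2 (x 0).pos.ne'))

lemma IsBernoulli.nullSingletonClass (hμ : IsBernoulli N μ) (hN : 2 ≤ N) :
    NullSingletonClass μ where
  measure_singleton x := by
    have hlt : (N : ENNReal)⁻¹ < 1 := ENNReal.inv_lt_one.2 (by exact_mod_cast hN)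
    refine le_antisymm (ge_of_tendsto' (ENNReal.tendsto_pow_atTop_nhds_zero_of_lt_one hlt)
      fun n => ?_) zero_le
    rw [← hμ n x]
    exact measure_mono (Set.singleton_subset_iff.2 fun i _ => rfl)

lemma integral_norm_greenLevel_mul_le (hμ : IsBernoulli N μ) (hf : Integrable f μ) {C : ℝ}
    (hC : ∀ x, |f x| ≤ C) (m : ℕ) (x : SSp N) :
    ∫ y, ‖greenLevel m x y * f y‖ ∂μ ≤ 2 * (N : ℝ)⁻¹ * C * ((N : ℝ)⁻¹) ^ (m + 1) := by
  have hcyl : IntegrableOn (fun _ => 2 * (N : ℝ)⁻¹ * C) (cyl N (m + 1) x) μ :=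
    integrableOn_const (hμ.cyl_ne_top _ _)
  calc ∫ y, ‖greenLevel m x y * f y‖ ∂μ
      ≤ ∫ y, (cyl N (m + 1) x).indicator (fun _ => 2 * (N : ℝ)⁻¹ * C) y ∂μ := by
        refine integral_mono (integrable_greenLevel_mul hf m x).norm
          (hcyl.integrable_indicator (measurableSet_cyl _ _)) fun y => ?_
        rw [Set.indicator_mul_const, norm_mul]
        exact mul_le_mul (abs_greenLevel_le m x y) (hC y) (abs_nonneg _)
          ((abs_nonneg _).trans (abs_greenLevel_le m x y))
    _ = 2 * (N : ℝ)⁻¹ * C * ((N : ℝ)⁻¹) ^ (m + 1) := by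
        rw [integral_indicator (measurableSet_cyl _ _), setIntegral_const, hμ.real_cyl,
          smul_eq_mul, mul_comm]

theorem continuous_Gop (hN : 2 ≤ N) (hμ : IsBernoulli N μ) (hf : Integrable f μ) {C : ℝ}
    (hC : ∀ x, |f x| ≤ C) : Continuous (Gop N μ f) := by
  have := hμ.nullSingletonClass hN
  have hlt : (N : ℝ)⁻¹ < 1 := inv_lt_one_of_one_lt₀ (by exact_mod_cast hN)
  have hsum : Summable fun m : ℕ => 2 * (N : ℝ)⁻¹ * C * ((N : ℝ)⁻¹) ^ (m + 1) :=
    ((summable_nat_add_iff 1).2 (summable_geometric_of_lt_one (by positivity) hlt)).mul_left _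
  have hbound := integral_norm_greenLevel_mul_le hμ hf hC
  have Gop_eq_tsum : Gop N μ f = fun x => ∑' m, greenTerm μ f m x := by
    funext x
    rw [Gop_eq_integral_tsum]
    exact (hasSum_integral_of_summable_integral_norm
      (fun m => integrable_greenLevel_mul hf m x)
      (hsum.of_nonneg_of_le (fun m => integral_nonneg fun y => norm_nonneg _)
        (hbound · x))).tsum_eq.symm
  rw [Gop_eq_tsum]
  exact continuous_tsum (fun m => continuous_of_forall_mem_cyl_eq fun x y => greenTerm_congr) hsum
    fun m x => (norm_integral_le_integral_norm _).trans (hbound m x)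

lemma IsBernoulli.pow_mul_cylIntegral (hμ : IsBernoulli N μ) (f : SSp N → ℝ) (n : ℕ)
    (x : SSp N) : (N : ℝ) ^ n * cylIntegral μ f n x = ⨍ y in cyl N n x, f y ∂μ := by
  rw [setAverage_eq, hμ.real_cyl, inv_pow, inv_inv, smul_eq_mul, cylIntegral]

lemma dist_pow_mul_cylIntegral_le (hμ : IsBernoulli N μ) (hf : Integrable f μ) {n : ℕ} {x : SSp N}
    {ε : ℝ} (h : ∀ y ∈ cyl N n x, dist (f y) (f x) ≤ ε) :
    dist ((N : ℝ) ^ n * cylIntegral μ f n x) (f x) ≤ ε := by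
  have h_ne_zero : μ (cyl N n x) ≠ 0 := by
    rw [hμ]
    exact pow_ne_zero _ (ENNReal.inv_ne_zero.2 (ENNReal.natCast_ne_top N))
  rw [hμ.pow_mul_cylIntegral]
  exact (convex_closedBall (f x) ε).set_average_mem Metric.isClosed_closedBall h_ne_zero
    (hμ.cyl_ne_top n x)
    ((ae_restrict_mem (measurableSet_cyl n x)).mono h) hf.integrableOn

end Bernoulli

/-- for every continuous `f`, `G_μ f ∈ 𝒟_0` with `Δ(G_μ f) = −f`,
i.e. `lim_{m→∞} max_{p ∈ V_m ∖ V_0} |N^{m+1} H_m (G_μ f)(p) + f(p)| = 0`. -/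
theorem statement18 (N : ℕ) (hN : 2 ≤ N)
    (μ : Measure (SSp N)) [IsProbabilityMeasure μ] (hμ : IsBernoulli N μ)
    (f : SSp N → ℝ) (hf : Continuous f) :
    IsLaplacianOn N 0 (Gop N μ f) (fun x => -f x) := by
  have := hμ.nullSingletonClass hN
  have hfi : Integrable f μ := hf.integrable_of_hasCompactSupport (.of_compactSpace f)
  obtain ⟨C, hC⟩ := isCompact_univ.exists_bound_of_continuousOn hf.continuousOn
  refine ⟨continuous_Gop hN hμ hfi fun x => hC x (Set.mem_univ x), hf.neg, fun ε hε => ?_⟩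
  obtain ⟨n, hn⟩ := exists_forall_mem_cyl_dist_lt hf (half_pos hε)
  refine ⟨n, fun m hm p hp hp0 => ?_⟩
  rw [H_Gop hfi hp hp0, mul_neg, ← Real.dist_eq, dist_neg_neg]
  calc dist ((N : ℝ) ^ (m + 1) * cylIntegral μ f (m + 1) p) (f p)
      ≤ ε / 2 := dist_pow_mul_cylIntegral_le hμ hfi fun y hy =>
        (hn p y (cyl_anti p (by lia) hy)).le
    _ < ε := half_lt_self hε
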